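/- Let C be a unital C*-algebra, let B_0 ⊆ B_1 ⊆ ⋯ ⊆ B_n be unital C*-subalgebras of C with common unit, and for 1 ≤ k ≤ n let E_k : B_k → B_{k−1} be a conditional expectation. Let z be a positive invertible element of B_0 lying in the center of C, and let e_1, …, e_{2n−1} be projections in C satisfying: e_k e_{k+1} e_k = z^{−1} e_k and e_{k+1} e_k e_{k+1} = z^{−1} e_{k+1} for 1 ≤ k ≤ 2n−2; e_k e_l = e_l e_k for |k − l| > 1; e_l x = x e_l for all x ∈ B_k whenever l > k; and e_k x e_k = E_k(x) e_k for all x ∈ B_k and 1 ≤ k ≤ n. Set f_n = z^{n(n−1)/2} (e_n e_{n−1} ⋯ e_1)(e_{n+1} e_n ⋯ e_2) ⋯ (e_{2n−1} e_{2n−2} ⋯ e_n). Then for every x ∈ B_n, f_n x f_n = (E_1 ∘ E_2 ∘ ⋯ ∘ E_n)(x) f_n. -/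

import Mathlib

/-- The descending product `e a * e (a - 1) * ⋯ * e b` (equal to `1` when `b > a`). -/
def dProd {C : Type*} [Monoid C] (e : ℕ → C) (a b : ℕ) : C :=
  ((List.range (a + 1 - b)).map fun i => e (a - i)).prod

/-- The ascending product `e a * e (a + 1) * ⋯ * e b` (equal to `1` when `a > b`). -/
def aProd {C : Type*} [Monoid C] (e : ℕ → C) (a b : ℕ) : C :=
  ((List.range (b + 1 - a)).map fun i => e (a + i)).prod

/-- `gElt e n j` is the element
`g_n^{(j)} = (e_{n+j} e_{n+j-1} ⋯ e_{j+1}) (e_{n+j+1} e_{n+j} ⋯ e_{j+2}) ⋯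
(e_{2n+j-1} e_{2n+j-2} ⋯ e_{n+j})`, a product of `n` blocks whose `i`-th block
(`1 ≤ i ≤ n`) is the descending product `e_{n+j+i-1} e_{n+j+i-2} ⋯ e_{j+i}`;
and `g_0^{(j)} = 1`. -/
def gElt {C : Type*} [Monoid C] (e : ℕ → C) (n j : ℕ) : C :=
  ((List.range n).map fun i => dProd e (n + j + i) (j + i + 1)).prod

/-- `iterE E m x = E 1 (E 2 (⋯ (E m x)))`, the composition `E_1 ∘ E_2 ∘ ⋯ ∘ E_m`
applied to `x`. -/
def iterE {C : Type*} [AddCommGroup C] [Module ℂ C] (E : ℕ → (C →ₗ[ℂ] C)) :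
    ℕ → C → C
  | 0, x => x
  | (m + 1), x => iterE E m (E (m + 1) x)

lemma dProd_comm {C : Type*} [Monoid C] (e : ℕ → C) (a b : ℕ) (y : C)
    (h : ∀ l, b ≤ l → l ≤ a → Commute y (e l)) : Commute y (dProd e a b) := by
  unfold dProd
  apply Commute.list_prod_right
  intro w hw
  obtain ⟨i, hi, rfl⟩ := List.mem_map.1 hw
  have := List.mem_range.1 hi
  exact h _ (by omega) (by omega)

lemma aProd_comm {C : Type*} [Monoid C] (e : ℕ → C) (a b : ℕ) (y : C)
    (h : ∀ l, a ≤ l → l ≤ b → Commute y (e l)) : Commute y (aProd e a b) := by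
  unfold aProd
  apply Commute.list_prod_right
  intro w hw
  obtain ⟨i, hi, rfl⟩ := List.mem_map.1 hw
  have := List.mem_range.1 hi
  exact h _ (by omega) (by omega)

lemma gElt_comm {C : Type*} [Monoid C] (e : ℕ → C) (n : ℕ) (y : C)
    (h : ∀ l, 1 ≤ l → l + 1 ≤ 2 * n → Commute y (e l)) : Commute y (gElt e n 0) := by
  unfold gElt
  apply Commute.list_prod_right
  intro w hw
  obtain ⟨i, hi, rfl⟩ := List.mem_map.1 hw
  have := List.mem_range.1 hi
  exact dProd_comm _ _ _ _ fun l _ _ => h _ (by omega) (by omega)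

lemma dProd_succ {C : Type*} [Monoid C] (e : ℕ → C) (a b : ℕ) (h : b ≤ a + 1) :
    dProd e (a + 1) b = e (a + 1) * dProd e a b := by
  unfold dProd
  rw [show a + 1 + 1 - b = (a + 1 - b) + 1 by omega, List.range_succ_eq_map]
  simp only [List.map_cons, List.prod_cons, List.map_map, Nat.sub_zero]
  congr 2
  apply List.map_congr_left
  intro i _
  simp

lemma aProd_succ {C : Type*} [Monoid C] (e : ℕ → C) (a b : ℕ) (h : a ≤ b + 1) :
    aProd e a (b + 1) = aProd e a b * e (b + 1) := by
  unfold aProd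
  rw [show b + 1 + 1 - a = (b + 1 - a) + 1 by omega, List.range_succ]
  simp only [List.map_append, List.prod_append, List.map_cons, List.map_nil, List.prod_singleton]
  rw [show a + (b + 1 - a) = b + 1 by omega]

lemma aProd_empty {C : Type*} [Monoid C] (e : ℕ → C) (b : ℕ) : aProd e (b + 1) b = 1 := by
  simp [aProd]

lemma dProd_empty {C : Type*} [Monoid C] (e : ℕ → C) (b : ℕ) : dProd e b (b + 1) = 1 := by
  simp [dProd]

lemma gElt_aux {C : Type*} [Monoid C] (e : ℕ → C) (n : ℕ) 
    (h3 : ∀ k l, 1 ≤ k → l ≤ 2 * n + 1 → k + 1 < l → Commute (e l) (e k)) (m : ℕ)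
    (hm : m ≤ n + 1) :
    ((List.range m).map fun i => dProd e (n + 1 + i) (i + 1)).prod
      = aProd e (n + 1) (n + m) * ((List.range m).map fun i => dProd e (n + i) (i + 1)).prod := by
  induction m with
  | zero => simp [aProd_empty]
  | succ m ih =>
    rw [List.range_succ]
    simp only [List.map_append, List.prod_append, List.map_cons, List.map_nil, List.prod_singleton]
    rw [ih (by omega), ← add_assoc n m 1, aProd_succ _ _ _ (by omega),
      show n + 1 + m = n + m + 1 by omega, dProd_succ _ _ _ (by omega)]
    have hc : Commute (e (n + m + 1))
        ((List.range m).map fun i => dProd e (n + i) (i + 1)).prod := by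
      apply Commute.list_prod_right
      intro w hw
      obtain ⟨i, hi, rfl⟩ := List.mem_map.1 hw
      have := List.mem_range.1 hi
      exact dProd_comm _ _ _ _ fun l _ _ => h3 _ _ (by omega) (by omega) (by omega)
    simp only [mul_assoc]
    rw [← mul_assoc _ (e (n + m + 1)), ← hc.eq]
    simp only [mul_assoc]

lemma gElt_succ {C : Type*} [Monoid C] (e : ℕ → C) (n : ℕ) 
    (h3 : ∀ k l, 1 ≤ k → l ≤ 2 * n + 1 → k + 1 < l → Commute (e l) (e k)) :
    gElt e (n + 1) 0 = aProd e (n + 1) (2 * n + 1) * (gElt e n 0 * dProd e (2 * n) (n + 1)) := by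
  have := gElt_aux e n h3 (n + 1) le_rfl
  unfold gElt
  simp only [add_zero, zero_add]
  rw [this, List.range_succ]
  simp only [List.map_append, List.prod_append, List.map_cons, List.map_nil, List.prod_singleton]
  rw [show n + (n + 1) = 2 * n + 1 by omega, show n + n = 2 * n by omega]

lemma dProd_aProd {C : Type*} [Monoid C] (e : ℕ → C) (z : C) (hz : ∀ c, Commute z c) (b m : ℕ)
    (hp : e b * e b = e b)
    (h2 : ∀ k, b ≤ k → k < b + m → z * (e (k + 1) * e k * e (k + 1)) = e (k + 1)) :
    z ^ m * (dProd e (b + m) b * aProd e b (b + m)) = e (b + m) := by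
  induction m with
  | zero => simp [dProd, aProd, hp]
  | succ m ih =>
    have ih := ih fun k _ _ => h2 k (by omega) (by omega)
    rw [← add_assoc b m 1, dProd_succ _ _ _ (by omega), aProd_succ _ _ _ (by omega), pow_succ']
    calc _ = z * (z ^ m * e (b + m + 1)) * ((dProd e (b + m) b * aProd e b (b + m)) * e (b + m + 1)) := by
            simp only [mul_assoc]
      _ = z * (e (b + m + 1) * (z ^ m * (dProd e (b + m) b * aProd e b (b + m))) * e (b + m + 1)) := by
            rw [((hz (e (b + m + 1))).pow_left m).eq]; simp only [mul_assoc]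
      _ = _ := by rw [ih, h2 _ (by omega) (by omega)]

lemma dProd_last {C : Type*} [Monoid C] (e : ℕ → C) (b m : ℕ) (hp : e b * e b = e b) :
    dProd e (b + m) b * e b = dProd e (b + m) b := by
  induction m with
  | zero => simp [dProd, hp]
  | succ m ih => rw [← add_assoc, dProd_succ _ _ _ (by omega), mul_assoc, ih]

lemma aProd_first {C : Type*} [Monoid C] (e : ℕ → C) (b m : ℕ) (hp : e b * e b = e b) :
    e b * aProd e b (b + m) = aProd e b (b + m) := by
  induction m with
  | zero => simp [aProd, hp]
  | succ m ih => rw [← add_assoc, aProd_succ _ _ _ (by omega), ← mul_assoc, ih]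

/-- Let `B₀ ⊆ B₁ ⊆ ⋯ ⊆ Bₙ` be unital C*-subalgebras of a unital C*-algebra `C` with
conditional expectations `E_k : B_k → B_{k-1}`, let `z ∈ B₀` be positive, invertible and
central in `C`, and let `e₁, …, e_{2n-1}` be projections satisfying the Jones relations,
commuting with `B_k` for indices `> k`, and implementing the expectations:
`e_k x e_k = E_k (x) e_k` for `x ∈ B_k`.  Then, with
`fₙ = z^{n(n-1)/2} (eₙ ⋯ e₁)(e_{n+1} ⋯ e₂) ⋯ (e_{2n-1} ⋯ eₙ)`, every `x ∈ Bₙ` satisfies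
`fₙ x fₙ = (E₁ ∘ E₂ ∘ ⋯ ∘ Eₙ)(x) fₙ`. -/
theorem jones_fn_compression_tower
    {C : Type*} [CStarAlgebra C] [PartialOrder C] [StarOrderedRing C]
    (n : ℕ) (Bsub : ℕ → StarSubalgebra ℂ C)
    (hchain : ∀ k, k < n → Bsub k ≤ Bsub (k + 1))
    (E : ℕ → (C →ₗ[ℂ] C))
    (hCE : ∀ k, 1 ≤ k → k ≤ n →
      (∀ x ∈ Bsub k, E k x ∈ Bsub (k - 1)) ∧
      (∀ x ∈ Bsub (k - 1), E k x = x) ∧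
      (∀ a ∈ Bsub (k - 1), ∀ c ∈ Bsub (k - 1), ∀ x ∈ Bsub k,
        E k (a * x * c) = a * E k x * c) ∧
      (∀ x ∈ Bsub k, 0 ≤ x → 0 ≤ E k x))
    (z : C) [Invertible z] (hz0 : z ∈ Bsub 0) (hzpos : 0 ≤ z)
    (hzc : ∀ c : C, z * c = c * z)
    (e : ℕ → C)
    (hproj : ∀ k, 1 ≤ k → k ≤ 2 * n - 1 → star (e k) = e k ∧ e k * e k = e k)
    (h1 : ∀ k, 1 ≤ k → k + 1 ≤ 2 * n - 1 → e k * e (k + 1) * e k = ⅟z * e k)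
    (h2 : ∀ k, 1 ≤ k → k + 1 ≤ 2 * n - 1 → e (k + 1) * e k * e (k + 1) = ⅟z * e (k + 1))
    (h3 : ∀ k l, 1 ≤ k → k ≤ 2 * n - 1 → 1 ≤ l → l ≤ 2 * n - 1 →
      (k + 1 < l ∨ l + 1 < k) → e k * e l = e l * e k)
    (hcommB : ∀ l k, k ≤ n → k < l → l ≤ 2 * n - 1 → ∀ x ∈ Bsub k, e l * x = x * e l)
    (hJonesE : ∀ k, 1 ≤ k → k ≤ n → ∀ x ∈ Bsub k, e k * x * e k = E k x * e k)
    (x : C) (hx : x ∈ Bsub n) :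
    (z ^ (n * (n - 1) / 2) * gElt e n 0) * x * (z ^ (n * (n - 1) / 2) * gElt e n 0)
      = iterE E n x * (z ^ (n * (n - 1) / 2) * gElt e n 0) := by
  have hzC : ∀ c : C, Commute z c := hzc
  have hiter : ∀ m, m ≤ n → ∀ x ∈ Bsub m, iterE E m x ∈ Bsub 0 := by
    intro m
    induction m with
    | zero => intro _ x hx; exact hx
    | succ m ih =>
      intro hm x hx
      exact ih (by omega) _ ((hCE (m + 1) (by omega) hm).1 x hx)
  have key : ∀ m, m ≤ n → ∀ x ∈ Bsub m,
      z ^ (m * (m - 1) / 2) * (gElt e m 0 * x * gElt e m 0) = iterE E m x * gElt e m 0 := by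
    intro m
    induction m with
    | zero => intro _ x _; simp [gElt, iterE]
    | succ m ih =>
      intro hm x hx
      have hy := (hCE (m + 1) (by omega) hm).1 x hx
      simp only [Nat.add_sub_cancel] at hy
      have ih := ih (by omega) _ hy
      have h0 := hiter m (by omega) _ hy
      have hJ := hJonesE (m + 1) (by omega) hm x hx
      rw [Nat.triangle_succ]
      simp only [iterE]
      set y := E (m + 1) x with hydef
      set w := iterE E m y with hw
      have hpm : e (m + 1) * e (m + 1) = e (m + 1) := (hproj _ (by omega) (by omega)).2
      have hc3 : ∀ k l, 1 ≤ k → l ≤ 2 * m + 1 → k + 1 < l → Commute (e l) (e k) :=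
        fun k l _ _ _ => h3 l k (by omega) (by omega) (by omega) (by omega) (by omega)
      have hcy : ∀ l, m + 1 ≤ l → l ≤ 2 * m + 1 → Commute y (e l) :=
        fun l _ _ => (hcommB l m (by omega) (by omega) (by omega) y hy).symm
      have hcw : ∀ l, 1 ≤ l → l ≤ 2 * m + 1 → Commute w (e l) :=
        fun l _ _ => (hcommB l 0 (by omega) (by omega) (by omega) w h0).symm
      have hDA := dProd_aProd e z hzC (m + 1) m hpm (fun k _ _ => by
        rw [h2 k (by omega) (by omega), mul_invOf_cancel_left])
      have hDl := dProd_last e (m + 1) m hpm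
      have hAf := aProd_first e (m + 1) m hpm
      rw [show m + 1 + m = 2 * m + 1 by omega] at hDA hDl hAf
      have hch : Commute (e (2 * m + 1)) (gElt e m 0) :=
        gElt_comm e m _ fun l _ _ => hc3 _ _ (by omega) (by omega) (by omega)
      have hcyD : Commute y (dProd e (2 * m + 1) (m + 1)) := dProd_comm _ _ _ _ hcy
      have hcwa : Commute w (aProd e (m + 1) (2 * m + 1)) :=
        aProd_comm _ _ _ _ fun l _ _ => hcw l (by omega) (by omega)
      have hA : aProd e (m + 1) (2 * m + 1) = aProd e (m + 1) (2 * m) * e (2 * m + 1) :=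
        aProd_succ _ _ _ (by omega)
      have hD : dProd e (2 * m + 1) (m + 1) = e (2 * m + 1) * dProd e (2 * m) (m + 1) :=
        dProd_succ _ _ _ (by omega)
      have hg1 := gElt_succ e m hc3
      have hg2 : gElt e (m + 1) 0 = aProd e (m + 1) (2 * m) * gElt e m 0 *
          dProd e (2 * m + 1) (m + 1) := by
        rw [hg1, hA, hD]
        simp only [mul_assoc]
        rw [← mul_assoc (e _), hch.eq]
        simp only [mul_assoc]
      have hDxA : z ^ m * (dProd e (2 * m + 1) (m + 1) * x * aProd e (m + 1) (2 * m + 1))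
          = y * e (2 * m + 1) := by
        calc _ = z ^ m * (dProd e (2 * m + 1) (m + 1) * e (m + 1) * x *
                (e (m + 1) * aProd e (m + 1) (2 * m + 1))) := by rw [hDl, hAf]
          _ = z ^ m * (dProd e (2 * m + 1) (m + 1) * (e (m + 1) * x * e (m + 1)) *
                aProd e (m + 1) (2 * m + 1)) := by simp only [mul_assoc]
          _ = z ^ m * (dProd e (2 * m + 1) (m + 1) * y *
                (e (m + 1) * aProd e (m + 1) (2 * m + 1))) := by rw [hJ]; simp only [mul_assoc]
          _ = (z ^ m * y) * (dProd e (2 * m + 1) (m + 1) * aProd e (m + 1) (2 * m + 1)) := by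
                rw [hAf, ← hcyD.eq]; simp only [mul_assoc]
          _ = _ := by rw [((hzC y).pow_left m).eq, mul_assoc, hDA]
      set g := gElt e m 0
      set A := aProd e (m + 1) (2 * m + 1)
      set a := aProd e (m + 1) (2 * m)
      set D := dProd e (2 * m + 1) (m + 1)
      set d := dProd e (2 * m) (m + 1)
      set p := e (2 * m + 1)
      set N := m * (m - 1) / 2
      have hzN : ∀ (k : ℕ) (c : C), z ^ k * c = c * z ^ k := fun k c => ((hzC c).pow_left k).eq
      calc z ^ (N + m) * (gElt e (m + 1) 0 * x * gElt e (m + 1) 0)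
          = z ^ N * z ^ m * ((a * g * D) * x * (A * (g * d))) := by
              rw [pow_add]; congr 2
              · rw [← hg2]
          _ = z ^ N * ((z ^ m * (a * g)) * (D * x * A) * (g * d)) := by simp only [mul_assoc]
          _ = z ^ N * (a * g * (z ^ m * (D * x * A)) * (g * d)) := by
              rw [hzN m (a * g)]; simp only [mul_assoc]
          _ = z ^ N * (a * (g * (y * p) * g) * d) := by rw [hDxA]; simp only [mul_assoc]
          _ = z ^ N * (a * (p * (g * y * g)) * d) := by
              have : g * (y * p) * g = p * (g * y * g) := by
                have hyp : y * p = p * y := (hcy _ (by omega) (by omega)).eq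
                rw [hyp, ← mul_assoc, ← hch.eq]; simp only [mul_assoc]
              rw [this]
          _ = (z ^ N * A) * (g * y * g) * d := by rw [hA]; simp only [mul_assoc]
          _ = A * (z ^ N * (g * y * g)) * d := by rw [hzN]; simp only [mul_assoc]
          _ = (A * w) * (g * d) := by rw [ih]; simp only [mul_assoc]
          _ = w * gElt e (m + 1) 0 := by rw [← hcwa.eq, hg1]; simp only [mul_assoc]
  have hk := key n le_rfl x hx
  set N := n * (n - 1) / 2
  have hzN : ∀ (c : C), z ^ N * c = c * z ^ N := fun c => ((hzC c).pow_left N).eq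
  calc _ = z ^ N * ((gElt e n 0 * x) * z ^ N * gElt e n 0) := by simp only [mul_assoc]
    _ = z ^ N * (z ^ N * (gElt e n 0 * x * gElt e n 0)) := by
        rw [← hzN]; simp only [mul_assoc]
    _ = _ := by rw [hk, ← mul_assoc, hzN, mul_assoc]
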